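/- Fix M > 0 and let f : [0,M] → ℝ be continuous. Then the map φ_f : D_M → D_M, x ↦ x + f, is continuous with respect to the Skorohod J1 distance; quantitatively, for all x, y ∈ D_M and δ > 0 with d_{J1}(x,y) < δ one has d_{J1}(x+f, y+f) ≤ 4δ + w_f(2δ), where w_f(δ) = sup{ |f(s) − f(t)| : s,t ∈ [0,M], |s−t| ≤ δ } is the modulus of continuity of f. -/

import Mathlib

open MeasureTheory Filter Set

noncomputable section

/-- Time changes on `[0,M]`: strictly increasing continuous bijections fixing the
endpoints. -/
def TimeChange (M : ℝ) : Set (ℝ → ℝ) :=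
  {l | ContinuousOn l (Icc 0 M) ∧ StrictMonoOn l (Icc 0 M) ∧
       l 0 = 0 ∧ l M = M ∧ Set.BijOn l (Icc 0 M) (Icc 0 M)}

/-- The Skorohod J1 distance on `[0,M]`. -/
def dJ1 (M : ℝ) (f g : ℝ → ℝ) : ℝ :=
  sInf ((fun l => max (⨆ t : Icc (0:ℝ) M, |f t - g (l t)|)
                      (⨆ t : Icc (0:ℝ) M, |l t - (t : ℝ)|)) '' TimeChange M)

/-- càdlàg on `[0,M]`. -/
def Cadlag (M : ℝ) (x : ℝ → ℝ) : Prop :=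
  (∀ t ∈ Ico (0:ℝ) M, Tendsto x (nhdsWithin t (Ioi t)) (nhds (x t))) ∧
  (∀ t ∈ Ioc (0:ℝ) M, ∃ L : ℝ, Tendsto x (nhdsWithin t (Iio t)) (nhds L))

/-- The modulus of continuity of `f` on `[0,M]` at scale `δ`. -/
def modCont (M : ℝ) (f : ℝ → ℝ) (δ : ℝ) : ℝ :=
  sSup {r : ℝ | ∃ s ∈ Icc (0:ℝ) M, ∃ t ∈ Icc (0:ℝ) M, |s - t| ≤ δ ∧ r = |f s - f t|}

/-!
A time change `l` that is nearly optimal for `x` and `y` is also good for `x + f` and `y + f`: if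
`l` moves every point by less than `δ`, then `|f t - f (l t)| ≤ w_f(δ)`, so the sup-distance grows
by at most `w_f(δ)`. As `w_f(δ) → 0`, this gives continuity, with a `δ` that does not depend on `x`.

In `ℝ` the supremum of an unbounded set is `0`, so pointwise bounds can be read off `dJ1` and
`modCont` only for bounded functions. Càdlàg functions are bounded on `[0, M]` by compactness, as
the one-sided limits bound them near every point.
-/

open Bornology
open scoped Topology

theorem isBounded_image_of_forall_nhdsWithin {X Y : Type*} [TopologicalSpace X] [Bornology Y]
    {f : X → Y} {K : Set X} (hK : IsCompact K)
    (hf : ∀ t ∈ K, ∃ s ∈ 𝓝[K] t, IsBounded (f '' s)) : IsBounded (f '' K) := by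
  refine hK.induction_on (p := fun s => IsBounded (f '' s)) ?_ ?_ ?_ hf
  · rw [image_empty]
    exact isBounded_empty
  · exact fun s t hst ht => ht.subset (image_mono hst)
  · intro s t hs ht
    rw [image_union]
    exact hs.union ht

theorem isBounded_image_Icc_of_forall_tendsto {α β : Type*} [LinearOrder α] [TopologicalSpace α]
    [CompactIccSpace α] [PseudoMetricSpace β] {f : α → β} {a b : α}
    (hright : ∀ t ∈ Ico a b, ∃ L, Tendsto f (𝓝[>] t) (𝓝 L))
    (hleft : ∀ t ∈ Ioc a b, ∃ L, Tendsto f (𝓝[<] t) (𝓝 L)) :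
    IsBounded (f '' Icc a b) := by
  refine isBounded_image_of_forall_nhdsWithin isCompact_Icc fun t ht => ?_
  have bounded_left : ∃ s ∈ 𝓝[Icc a b ∩ Iio t] t, IsBounded (f '' s) := by
    rcases ht.1.eq_or_lt with rfl | hat
    · have hempty : Icc a b ∩ Iio a = ∅ :=
        eq_empty_of_forall_notMem fun u hu => hu.1.1.not_gt hu.2
      exact ⟨∅, by simp [hempty], by simp⟩
    · obtain ⟨L, hL⟩ := hleft t ⟨hat, ht.2⟩
      exact Metric.exists_isBounded_image_of_tendsto
        (hL.mono_left (nhdsWithin_mono t inter_subset_right))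
  have bounded_right : ∃ s ∈ 𝓝[Icc a b ∩ Ioi t] t, IsBounded (f '' s) := by
    rcases ht.2.eq_or_lt with rfl | htb
    · have hempty : Icc a t ∩ Ioi t = ∅ :=
        eq_empty_of_forall_notMem fun u hu => hu.1.2.not_gt hu.2
      exact ⟨∅, by simp [hempty], by simp⟩
    · obtain ⟨L, hL⟩ := hright t ⟨ht.1, htb⟩
      exact Metric.exists_isBounded_image_of_tendsto
        (hL.mono_left (nhdsWithin_mono t inter_subset_right))
  obtain ⟨s, hs, hfs⟩ := bounded_left
  obtain ⟨u, hu, hfu⟩ := bounded_right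
  have mem_punctured : s ∪ u ∈ 𝓝[Icc a b \ {t}] t := by
    rw [← nhdsWithinLT_sup_nhdsWithinGT]
    exact union_mem_sup hs hu
  refine ⟨insert t (s ∪ u), ?_, ?_⟩
  · rw [← insert_eq_of_mem ht, ← insert_sdiff_singleton]
    exact insert_mem_nhdsWithin_insert mem_punctured
  · rw [image_insert_eq, image_union]
    exact (hfs.union hfu).insert _

theorem bddAbove_range_dist {ι β : Type*} [PseudoMetricSpace β] {A B : Set β} (hA : IsBounded A)
    (hB : IsBounded B) {u v : ι → β} (hu : ∀ i, u i ∈ A) (hv : ∀ i, v i ∈ B) :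
    BddAbove (range fun i => dist (u i) (v i)) := by
  refine ⟨Metric.diam (A ∪ B), ?_⟩
  rintro _ ⟨i, rfl⟩
  exact Metric.dist_le_diam_of_mem (hA.union hB) (.inl (hu i)) (.inr (hv i))

section

variable {M δ : ℝ} {f x y l : ℝ → ℝ}

theorem Cadlag.isBounded_image (hx : Cadlag M x) : IsBounded (x '' Icc 0 M) :=
  isBounded_image_Icc_of_forall_tendsto (fun t ht => ⟨x t, hx.1 t ht⟩) hx.2

theorem modCont_nonneg : 0 ≤ modCont M f δ := by
  refine Real.sSup_nonneg ?_
  rintro _ ⟨s, -, t, -, -, rfl⟩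
  exact abs_nonneg _

theorem abs_sub_le_modCont (hf : IsBounded (f '' Icc 0 M)) {s t : ℝ} (hs : s ∈ Icc 0 M)
    (ht : t ∈ Icc 0 M) (hst : |s - t| ≤ δ) : |f s - f t| ≤ modCont M f δ := by
  refine le_csSup ⟨Metric.diam (f '' Icc 0 M), ?_⟩ ⟨s, hs, t, ht, hst, rfl⟩
  rintro _ ⟨s', hs', t', ht', -, rfl⟩
  exact Metric.dist_le_diam_of_mem hf (mem_image_of_mem f hs') (mem_image_of_mem f ht')

theorem modCont_mono (hf : IsBounded (f '' Icc 0 M)) : Monotone (modCont M f) := by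
  intro δ₁ δ₂ hδ
  refine Real.sSup_le ?_ modCont_nonneg
  rintro _ ⟨s, hs, t, ht, hst, rfl⟩
  exact abs_sub_le_modCont hf hs ht (hst.trans hδ)

theorem tendsto_modCont_zero (hf : ContinuousOn f (Icc 0 M)) :
    Tendsto (modCont M f) (𝓝[>] 0) (𝓝 0) := by
  have hunif := isCompact_Icc.uniformContinuousOn_of_continuous hf
  refine tendsto_order.2 ⟨fun c hc => .of_forall fun δ => hc.trans_le modCont_nonneg,
    fun ε hε => ?_⟩
  obtain ⟨η, hη, hfη⟩ := Metric.uniformContinuousOn_iff.1 hunif (ε / 2) (half_pos hε)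
  filter_upwards [Ioo_mem_nhdsGT hη] with δ hδ
  refine lt_of_le_of_lt (Real.sSup_le ?_ (half_pos hε).le) (half_lt_self hε)
  rintro _ ⟨s, hs, t, ht, hst, rfl⟩
  exact (hfη s hs t ht (hst.trans_lt hδ.2)).le

theorem id_mem_timeChange : id ∈ TimeChange M :=
  ⟨continuousOn_id, strictMonoOn_id, rfl, rfl, bijOn_id _⟩

theorem mapsTo_of_mem_timeChange (hl : l ∈ TimeChange M) : MapsTo l (Icc 0 M) (Icc 0 M) :=
  hl.2.2.2.2.mapsTo

theorem exists_timeChange_of_dJ1_lt (hx : IsBounded (x '' Icc 0 M))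
    (hy : IsBounded (y '' Icc 0 M)) (hxy : dJ1 M x y < δ) :
    ∃ l ∈ TimeChange M, ∀ t ∈ Icc 0 M, |x t - y (l t)| < δ ∧ |l t - t| < δ := by
  obtain ⟨_, ⟨l, hl, rfl⟩, hlδ⟩ :=
    exists_lt_of_csInf_lt (image_nonempty.2 ⟨id, id_mem_timeChange⟩) hxy
  obtain ⟨hspace, htime⟩ := max_lt_iff.1 hlδ
  have hmaps := mapsTo_of_mem_timeChange hl
  have bddAbove_space : BddAbove (range fun t : Icc 0 M => |x t - y (l t)|) :=
    bddAbove_range_dist hx hy (fun t => mem_image_of_mem x t.2)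
      (fun t => mem_image_of_mem y (hmaps t.2))
  have bddAbove_time : BddAbove (range fun t : Icc 0 M => |l t - t|) :=
    bddAbove_range_dist (Metric.isBounded_Icc 0 M) (Metric.isBounded_Icc 0 M)
      (fun t => hmaps t.2) (fun t => t.2)
  exact ⟨l, hl, fun t ht => ⟨(le_ciSup bddAbove_space ⟨t, ht⟩).trans_lt hspace,
    (le_ciSup bddAbove_time ⟨t, ht⟩).trans_lt htime⟩⟩

theorem dJ1_le_of_mem_timeChange (hM : 0 ≤ M) (hl : l ∈ TimeChange M)
    (hspace : ∀ t ∈ Icc 0 M, |x t - y (l t)| ≤ δ) (htime : ∀ t ∈ Icc 0 M, |l t - t| ≤ δ) :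
    dJ1 M x y ≤ δ := by
  have : Nonempty (Icc 0 M) := ⟨0, left_mem_Icc.2 hM⟩
  refine (csInf_le ⟨0, ?_⟩ (mem_image_of_mem _ hl)).trans
    (max_le (ciSup_le fun t => hspace t t.2) (ciSup_le fun t => htime t t.2))
  rintro _ ⟨k, -, rfl⟩
  exact (Real.iSup_nonneg fun t => abs_nonneg _).trans (le_max_left _ _)

theorem dJ1_add_le (hM : 0 ≤ M) (hf : IsBounded (f '' Icc 0 M)) (hx : IsBounded (x '' Icc 0 M))
    (hy : IsBounded (y '' Icc 0 M)) (hxy : dJ1 M x y < δ) :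
    dJ1 M (x + f) (y + f) ≤ δ + modCont M f δ := by
  obtain ⟨l, hl, hlδ⟩ := exists_timeChange_of_dJ1_lt hx hy hxy
  refine dJ1_le_of_mem_timeChange hM hl (fun t ht => ?_) fun t ht =>
    (hlδ t ht).2.le.trans (le_add_of_nonneg_right modCont_nonneg)
  have hfl : |f t - f (l t)| ≤ modCont M f δ :=
    abs_sub_le_modCont hf ht (mapsTo_of_mem_timeChange hl ht)
      ((abs_sub_comm t (l t)).trans_le (hlδ t ht).2.le)
  calc |(x + f) t - (y + f) (l t)| = |(x t - y (l t)) + (f t - f (l t))| := by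
        rw [Pi.add_apply, Pi.add_apply, add_sub_add_comm]
    _ ≤ |x t - y (l t)| + |f t - f (l t)| := abs_add_le _ _
    _ ≤ δ + modCont M f δ := add_le_add (hlδ t ht).1.le hfl

theorem add_continuous_function_J1_continuous_general (hM : 0 ≤ M)
    (hf : ContinuousOn f (Icc 0 M)) :
    (∀ ε > 0, ∃ δ > 0, ∀ x y : ℝ → ℝ, IsBounded (x '' Icc 0 M) → IsBounded (y '' Icc 0 M) →
      dJ1 M x y < δ → dJ1 M (x + f) (y + f) < ε) ∧
    (∀ x y : ℝ → ℝ, IsBounded (x '' Icc 0 M) → IsBounded (y '' Icc 0 M) → ∀ δ, dJ1 M x y < δ →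
      dJ1 M (x + f) (y + f) ≤ δ + modCont M f δ) := by
  have hfb : IsBounded (f '' Icc 0 M) := (isCompact_Icc.image_of_continuousOn hf).isBounded
  refine ⟨fun ε hε => ?_, fun x y hx hy δ => dJ1_add_le hM hfb hx hy⟩
  have hlim : Tendsto (fun δ => δ + modCont M f δ) (𝓝[>] 0) (𝓝 0) := by
    simpa using (tendsto_nhdsWithin_of_tendsto_nhds tendsto_id).add (tendsto_modCont_zero hf)
  obtain ⟨δ, hδε, hδ⟩ := ((hlim.eventually_lt_const hε).and self_mem_nhdsWithin).exists
  exact ⟨δ, hδ, fun x y hx hy hxy => (dJ1_add_le hM hfb hx hy hxy).trans_lt hδε⟩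

end

/-- **Adding a continuous function is J1-continuous.** The map `x ↦ x + f` on `D_M` is
continuous for the Skorohod J1 distance, and quantitatively
`d_{J1}(x+f, y+f) ≤ 4δ + w_f(2δ)` whenever `d_{J1}(x,y) < δ`. -/
theorem add_continuous_function_J1_continuous (M : ℝ) (hM : 0 < M)
    (f : ℝ → ℝ) (hf : ContinuousOn f (Icc 0 M)) :
    (∀ x : ℝ → ℝ, Cadlag M x → ∀ ε > 0, ∃ δ > 0, ∀ y : ℝ → ℝ, Cadlag M y →
      dJ1 M x y < δ → dJ1 M (x + f) (y + f) < ε) ∧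
    (∀ x y : ℝ → ℝ, Cadlag M x → Cadlag M y → ∀ δ > 0, dJ1 M x y < δ →
      dJ1 M (x + f) (y + f) ≤ 4 * δ + modCont M f (2 * δ)) := by
  obtain ⟨huniform, hbound⟩ := add_continuous_function_J1_continuous_general hM.le hf
  have hmono := modCont_mono (isCompact_Icc.image_of_continuousOn hf).isBounded
  refine ⟨fun x hx ε hε => ?_, fun x y hx hy δ hδ hxy => ?_⟩
  · obtain ⟨δ, hδ, h⟩ := huniform ε hε
    exact ⟨δ, hδ, fun y hy => h x y hx.isBounded_image hy.isBounded_image⟩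
  · exact (hbound x y hx.isBounded_image hy.isBounded_image δ hxy).trans
      (add_le_add (by linarith) (hmono (by linarith)))

end
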